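/- Let n ≥ 2 and let l : ℤ/n → {1,…,n} be a bijection (the level function of an n-crossing). Then the sum ∑_{i=1}^{n−1} m_i(l) of its size signature is divisible by 4. -/

import Mathlib

/-- The cyclic successor `j + 1` in `ℤ/n` (modeled as `Fin n`). -/
def cyc {n : ℕ} (j : Fin n) : Fin n :=
  ⟨(j.val + 1) % n, Nat.mod_lt _ (Nat.zero_lt_of_lt j.isLt)⟩

/-- The cyclic predecessor `j - 1` in `ℤ/n` (modeled as `Fin n`). -/
def cycPred {n : ℕ} (j : Fin n) : Fin n :=
  ⟨(j.val + (n - 1)) % n, Nat.mod_lt _ (Nat.zero_lt_of_lt j.isLt)⟩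

/-- The size `m i` of the `i`-th crossing-centered bipyramid of the `n`-crossing with
level function `l : ℤ/n → {1, …, n}`:
`m_i(l) = 2·|{ j : min(l j, l (j+1)) ≤ i  and  i+1 ≤ max(l j, l (j+1)) }|`. -/
def bipSize (n : ℕ) (l : Fin n → ℕ) (i : ℕ) : ℕ :=
  2 * (Finset.univ.filter fun j : Fin n =>
      min (l j) (l (cyc j)) ≤ i ∧ i + 1 ≤ max (l j) (l (cyc j))).card

/-! Fix `i` and call a strand low when its level is at most `i`. The `i`-th bipyramid counts, twice,
the cyclically adjacent pairs consisting of one low and one high strand. Going once around the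
crossing, one passes from low to high as often as from high to low, so there are evenly many such
pairs, and every single `m_i` is divisible by `4`. -/

section Parity

open Finset
open scoped symmDiff

theorem card_symmDiff_of_card_eq {α : Type*} [DecidableEq α] {s t : Finset α} (h : #s = #t) :
    #(s ∆ t) = 2 * #(s \ t) := by
  rw [Finset.symmDiff_def, card_union_of_disjoint disjoint_sdiff_sdiff, ← card_sdiff_comm h,
    two_mul]

theorem filter_not_iff {α : Type*} [DecidableEq α] (s : Finset α) (p q : α → Prop)
    [DecidablePred p] [DecidablePred q] :
    {a ∈ s | ¬(p a ↔ q a)} = {a ∈ s | p a} ∆ {a ∈ s | q a} := by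
  ext a
  simp only [mem_symmDiff, mem_filter]
  tauto

theorem even_card_filter_not_iff_of_bijective {α : Type*} [Fintype α] {f : α → α}
    (hf : f.Bijective) (p : α → Prop) [DecidablePred p] :
    Even #{a | ¬(p a ↔ p (f a))} := by
  classical
  have card_filter_comp_eq : #{a | p (f a)} = #{a | p a} := card_bijective f hf (by simp)
  rw [filter_not_iff, card_symmDiff_of_card_eq card_filter_comp_eq.symm]
  exact even_two_mul _

end Parity

theorem min_le_and_lt_max_iff {α : Type*} [LinearOrder α] {a b c : α} :
    min a b ≤ c ∧ c < max a b ↔ ¬(a ≤ c ↔ b ≤ c) := by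
  rw [min_le_iff, lt_max_iff, ← not_le, ← not_le]
  tauto

theorem cyc_eq_finRotate (n : ℕ) : cyc = finRotate n := by
  cases n with
  | zero => exact Subsingleton.elim _ _
  | succ k =>
    ext j
    simp [cyc, Fin.val_add]

theorem cyc_bijective (n : ℕ) : Function.Bijective (cyc : Fin n → Fin n) :=
  cyc_eq_finRotate n ▸ (finRotate n).bijective

theorem four_dvd_bipSize (n : ℕ) (l : Fin n → ℕ) (i : ℕ) : 4 ∣ bipSize n l i := by
  have even_card := even_card_filter_not_iff_of_bijective (cyc_bijective n) (l · ≤ i)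
  simp only [bipSize, Nat.succ_le_iff, min_le_and_lt_max_iff]
  exact mul_dvd_mul_left 2 even_card.two_dvd

theorem four_dvd_total_bipyramid_size_general (n : ℕ) (l : Fin n → ℕ) (s : Finset ℕ) :
    4 ∣ ∑ i ∈ s, bipSize n l i :=
  Finset.dvd_sum fun i _ => four_dvd_bipSize n l i

/-- the sum of the size signature of an `n`-crossing is divisible by `4`. -/
theorem four_dvd_total_bipyramid_size
    (n : ℕ) (hn : 2 ≤ n) (l : Fin n → ℕ)
    (hl : Set.BijOn l Set.univ (Set.Icc 1 n)) :
    4 ∣ ∑ i ∈ Finset.Icc 1 (n - 1), bipSize n l i :=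
  four_dvd_total_bipyramid_size_general n l _
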